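/- Let A be a unital complex C*-algebra and C a nonempty geodesically convex subset of the set P of positive invertible elements of A (i.e. γ_{x,y}(t) ∈ C for all x,y ∈ C and t ∈ [0,1]). Then the function a ↦ dist(a, C) = inf_{c∈C} d(a,c) is geodesically convex: for all a,b ∈ P and t ∈ [0,1], dist(γ_{a,b}(t), C) ≤ (1−t)·dist(a,C) + t·dist(b,C), where d(x,y) = ‖log(x^{-1/2} y x^{-1/2})‖ and γ_{a,b}(t) = a^{1/2}(a^{-1/2} b a^{-1/2})^t a^{1/2}. -/

import Mathlib

/-- An element of a unital C*-algebra is *positive invertible* if it is self-adjoint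
with spectrum contained in `(0, ∞)`. -/
def IsPosInv {A : Type*} [CStarAlgebra A] (a : A) : Prop :=
  IsSelfAdjoint a ∧ spectrum ℝ a ⊆ Set.Ioi (0 : ℝ)

/-- Real powers `a ^ t` defined by the continuous functional calculus. -/
noncomputable def cpow {A : Type*} [CStarAlgebra A] (a : A) (t : ℝ) : A :=
  cfc (fun x : ℝ => x ^ t) a

/-- The logarithm defined by the continuous functional calculus. -/
noncomputable def clog {A : Type*} [CStarAlgebra A] (a : A) : A :=
  cfc Real.log a

/-- The metric `d(x, y) = ‖log (x^{-1/2} y x^{-1/2})‖` on positive invertible elements. -/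
noncomputable def dd {A : Type*} [CStarAlgebra A] (x y : A) : ℝ :=
  ‖clog (cpow x (-(1/2)) * y * cpow x (-(1/2)))‖

/-- The geodesic `γ_{a,b}(t) = a^{1/2} (a^{-1/2} b a^{-1/2})^t a^{1/2}`. -/
noncomputable def geo {A : Type*} [CStarAlgebra A] (a b : A) (t : ℝ) : A :=
  cpow a (1/2) * cpow (cpow a (-(1/2)) * b * cpow a (-(1/2))) t * cpow a (1/2)

/-- The distance from a point to a subset. -/
noncomputable def distSet {A : Type*} [CStarAlgebra A] (x : A) (C : Set A) : ℝ :=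
  sInf {r : ℝ | ∃ c ∈ C, r = dd x c}

/-- The distance between two subsets. -/
noncomputable def distSets {A : Type*} [CStarAlgebra A] (C D : Set A) : ℝ :=
  sInf {r : ℝ | ∃ x ∈ C, ∃ y ∈ D, r = dd x y}

/-- The orbit `O_H(1) = {h h* : h ∈ H}` of the identity under the action `h · a = h a h*`. -/
def orbitOne {A : Type*} [CStarAlgebra A] (H : Subgroup Aˣ) : Set A :=
  {x : A | ∃ h ∈ H, x = (h : A) * star (h : A)}

/-- The fixed point set `P^H = {a positive invertible : h a h* = a for all h ∈ H}`. -/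
def fixedSet {A : Type*} [CStarAlgebra A] (H : Subgroup Aˣ) : Set A :=
  {a : A | IsPosInv a ∧ ∀ h ∈ H, (h : A) * a * star (h : A) = a}

/-- The similarity number `Sim(H) = inf {‖s‖ ‖s⁻¹‖ : s a unitarizer of H}`. -/
noncomputable def simNum {A : Type*} [CStarAlgebra A] (H : Subgroup Aˣ) : ℝ :=
  sInf {c : ℝ | ∃ s : Aˣ, (∀ h ∈ H, (↑s⁻¹ : A) * (h : A) * (s : A) ∈ unitary A) ∧
    c = ‖(s : A)‖ * ‖(↑s⁻¹ : A)‖}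

/-- The set of norms of elements of `H`; its supremum is the size `|H|`. -/
def normSet {A : Type*} [CStarAlgebra A] (H : Subgroup Aˣ) : Set ℝ :=
  {r : ℝ | ∃ h ∈ H, r = ‖(h : A)‖}

/-- The orbit diameter function `D_H(a) = sup_{h ∈ H} d(a, h a h*)`. -/
noncomputable def orbDiam {A : Type*} [CStarAlgebra A] (H : Subgroup Aˣ) (a : A) : ℝ :=
  sSup {r : ℝ | ∃ h ∈ H, r = dd a ((h : A) * a * star (h : A))}

/-- The size `|p H q| = sup_{h ∈ H} ‖p h q‖` of the conjugated family `p H q`. -/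
noncomputable def sizeConj {A : Type*} [CStarAlgebra A] (H : Subgroup Aˣ) (p q : A) : ℝ :=
  sSup {c : ℝ | ∃ h ∈ H, c = ‖p * (h : A) * q‖}

/-- The similarity number `Sim(p H q)` of the conjugated family `p H q`. -/
noncomputable def simConj {A : Type*} [CStarAlgebra A] (H : Subgroup Aˣ) (p q : A) : ℝ :=
  sInf {c : ℝ | ∃ u : Aˣ, (∀ h ∈ H, (↑u⁻¹ : A) * (p * (h : A) * q) * (u : A) ∈ unitary A) ∧
    c = ‖(u : A)‖ * ‖(↑u⁻¹ : A)‖}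

/-- The geodesic `γ_{r², s²}(t) = r (r⁻¹ s² r⁻¹)^t r` for positive invertible `r`, `s`. -/
noncomputable def gammaRS {A : Type*} [CStarAlgebra A] (r s : Aˣ) (t : ℝ) : A :=
  (r : A) * cpow ((↑r⁻¹ : A) * ((s : A) * (s : A)) * (↑r⁻¹ : A)) t * (r : A)

/-! The metric `d` is the Thompson metric of the positive cone: `d x y ≤ r` says exactly that
`y ≤ eʳ x` and `x ≤ eʳ y`. The geodesic `γ_{a,b}(t)` is the weighted geometric mean, which for
`t ∈ [0, 1]` is homogeneous of degrees `1 - t` and `t` in its two arguments and monotone in each of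
them: in `b` by operator monotonicity of `x ↦ xᵗ` (Löwner–Heinz), in `a` by the symmetry
`γ_{a,b}(t) = γ_{b,a}(1 - t)`. The symmetry holds because, by polar decomposition,
`γ_{yy*,yzy*}(t) = y zᵗ y*` for every invertible `y`, not only for `y = a^{1/2}`: replacing
`(y, z)` by `(y z^{1/2}, z⁻¹)` exchanges the endpoints. Hence
`d(γ_{a,b}(t), γ_{c,e}(t)) ≤ (1 - t) d(a, c) + t d(b, e)`; choosing `c, e ∈ C` almost nearest to `a`
and `b` gives the theorem, as `γ_{c,e}(t) ∈ C`. -/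

section StarOrderedRing

variable {R : Type*} [Ring R] [PartialOrder R] [StarRing R] [StarOrderedRing R]

lemma conjugate_le_conjugate_iff_of_isUnit {a b c : R} (hc : IsSelfAdjoint c)
    (hu : IsUnit c) : c * a * c ≤ c * b * c ↔ a ≤ b := by
  rw [← sub_nonneg, ← sub_mul, ← mul_sub, ← sub_nonneg (a := b)]
  simpa only [hc.star_eq] using hu.star_right_conjugate_nonneg_iff

lemma isStrictlyPositive_mul_star_self {y : R} (hy : IsUnit y) :
    IsStrictlyPositive (y * star y) :=
  .iff_of_unital.2 ⟨mul_star_self_nonneg y, hy.mul hy.star⟩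

end StarOrderedRing

section StarOrderedAlgebra

variable {A : Type*} [CStarAlgebra A] [PartialOrder A] [StarOrderedRing A]

lemma isPosInv_iff_isStrictlyPositive {a : A} : IsPosInv a ↔ IsStrictlyPositive a :=
  CStarAlgebra.isStrictlyPositive_iff_isSelfAdjoint_and_spectrum_pos.symm

lemma cpow_eq_rpow {a : A} (ha : 0 ≤ a) (t : ℝ) : cpow a t = a ^ t :=
  (CFC.rpow_eq_cfc_real ha).symm

lemma isSelfAdjoint_rpow (a : A) (t : ℝ) : IsSelfAdjoint (a ^ t) :=
  .of_nonneg CFC.rpow_nonneg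

lemma rpow_half_mul_rpow_half {a : A} (ha : 0 ≤ a) :
    a ^ (1 / 2 : ℝ) * a ^ (1 / 2 : ℝ) = a := by
  rw [← CFC.sqrt_eq_rpow, CFC.sqrt_mul_sqrt_self a]

lemma isStrictlyPositive_rpow_conj {a b : A} (ha : IsStrictlyPositive a)
    (hb : IsStrictlyPositive b) (s : ℝ) : IsStrictlyPositive (a ^ s * b * a ^ s) :=
  .conjugate_of_isUnit_of_isSelfAdjoint b (a ^ s) (ha.rpow a s).isUnit (isSelfAdjoint_rpow a s) hb

lemma continuousOn_rpow_const_spectrum {a : A} (ha : IsStrictlyPositive a) (t : ℝ) :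
    ContinuousOn (fun x : ℝ => x ^ t) (spectrum ℝ a) := fun x hx =>
  (Real.continuousAt_rpow_const x t
    (.inl ((isPosInv_iff_isStrictlyPositive.2 ha).2 hx).ne')).continuousWithinAt

lemma smul_rpow {a : A} (ha : IsStrictlyPositive a) {m : ℝ} (hm : 0 < m) (t : ℝ) :
    (m • a) ^ t = m ^ t • a ^ t := by
  have hpos : ∀ x ∈ spectrum ℝ a, 0 < x := fun _ hx =>
    (isPosInv_iff_isStrictlyPositive.2 ha).2 hx
  calc (m • a) ^ t = (cfc (fun x : ℝ => m * x) a) ^ t := by rw [cfc_const_mul_id m a]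
    _ = cfc (fun x : ℝ => (m * x) ^ t) a := CFC.cfc_rpow fun x hx => mul_pos hm (hpos x hx)
    _ = cfc (fun x : ℝ => m ^ t * x ^ t) a :=
        cfc_congr fun x hx => Real.mul_rpow hm.le (hpos x hx).le
    _ = m ^ t • a ^ t := by
        rw [CFC.rpow_eq_cfc_real ha.nonneg]
        exact cfc_const_mul _ _ a (continuousOn_rpow_const_spectrum ha t)

lemma rpow_unitary_conj {u a : A} (hu : u ∈ unitary A) (ha : IsStrictlyPositive a) (t : ℝ) :
    (u * a * star u) ^ t = u * a ^ t * star u := by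
  have hconj : 0 ≤ u * a * star u := star_right_conjugate_nonneg ha.nonneg u
  rw [CFC.rpow_eq_cfc_real ha.nonneg, CFC.rpow_eq_cfc_real hconj]
  exact (StarAlgHomClass.map_cfc (S := ℝ) (Unitary.conjStarAlgAut ℝ A ⟨u, hu⟩) _ a
    (continuousOn_rpow_const_spectrum ha t)
    ((continuous_const_mul u).mul continuous_const)
    ha.isSelfAdjoint hconj.isSelfAdjoint).symm

lemma geo_eq_rpow {a b : A} (ha : IsStrictlyPositive a) (hb : IsStrictlyPositive b) (t : ℝ) :
    geo a b t = a ^ (1 / 2 : ℝ) * (a ^ (-(1 / 2) : ℝ) * b * a ^ (-(1 / 2) : ℝ)) ^ t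
      * a ^ (1 / 2 : ℝ) := by
  rw [geo, cpow_eq_rpow ha.nonneg, cpow_eq_rpow ha.nonneg,
    cpow_eq_rpow (isStrictlyPositive_rpow_conj ha hb _).nonneg]

lemma isStrictlyPositive_geo {a b : A} (ha : IsStrictlyPositive a) (hb : IsStrictlyPositive b)
    (t : ℝ) : IsStrictlyPositive (geo a b t) := by
  rw [geo_eq_rpow ha hb]
  exact isStrictlyPositive_rpow_conj ha ((isStrictlyPositive_rpow_conj ha hb _).rpow _ t) _

lemma rpow_neg_half_mul_self_mem_unitary {y : A} (hy : IsUnit y) :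
    (y * star y) ^ (-(1 / 2) : ℝ) * y ∈ unitary A := by
  have hc := isStrictlyPositive_mul_star_self hy
  rw [((hc.rpow _ _).isUnit.mul hy).mem_unitary_iff_mul_star_self, star_mul,
    (isSelfAdjoint_rpow _ _).star_eq, mul_assoc, ← mul_assoc y, ← mul_assoc]
  exact CFC.conjugate_rpow_neg_one_half _ hc

lemma geo_mul_star_self {y z : A} (hy : IsUnit y) (hz : IsStrictlyPositive z) (t : ℝ) :
    geo (y * star y) (y * z * star y) t = y * z ^ t * star y := by
  have hc := isStrictlyPositive_mul_star_self hy
  have hu := rpow_neg_half_mul_self_mem_unitary hy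
  have hrs := CFC.rpow_mul_rpow_neg (1 / 2) hc
  have hsr := CFC.rpow_neg_mul_rpow (1 / 2) hc
  have hs_star := (isSelfAdjoint_rpow (y * star y) (-(1 / 2))).star_eq
  rw [geo_eq_rpow hc (hy.isStrictlyPositive_star_right_conjugate_iff.2 hz)]
  set r := (y * star y) ^ (1 / 2 : ℝ)
  set s := (y * star y) ^ (-(1 / 2) : ℝ)
  have hmiddle : s * (y * z * star y) * s = s * y * z * star (s * y) := by
    rw [star_mul, hs_star]; simp only [mul_assoc]
  calc r * (s * (y * z * star y) * s) ^ t * r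
      = r * (s * y * z ^ t * star (s * y)) * r := by rw [hmiddle, rpow_unitary_conj hu hz]
    _ = (r * s) * (y * z ^ t * star y) * (s * r) := by
        rw [star_mul, hs_star]; simp only [mul_assoc]
    _ = y * z ^ t * star y := by rw [hrs, hsr, one_mul, mul_one]

lemma geo_mul_star_self_swap {y z : A} (hy : IsUnit y) (hz : IsStrictlyPositive z) (t : ℝ) :
    geo (y * z * star y) (y * star y) (1 - t) = y * z ^ t * star y := by
  have hw_star := (isSelfAdjoint_rpow z (1 / 2)).star_eq
  have conj_rpow : ∀ s : ℝ, y * z ^ (1 / 2 : ℝ) * z ^ s * star (y * z ^ (1 / 2 : ℝ)) =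
      y * z ^ (s + 1) * star y := fun s => by
    calc y * z ^ (1 / 2 : ℝ) * z ^ s * star (y * z ^ (1 / 2 : ℝ))
        = y * (z ^ (1 / 2 : ℝ) * z ^ s * z ^ (1 / 2 : ℝ)) * star y := by
          rw [star_mul, hw_star]; simp only [mul_assoc]
      _ = y * z ^ (s + 1) * star y := by
          rw [← CFC.rpow_add hz.isUnit, ← CFC.rpow_add hz.isUnit]; ring_nf
  have hleft : y * z ^ (1 / 2 : ℝ) * star (y * z ^ (1 / 2 : ℝ)) = y * z * star y := by
    simpa [CFC.rpow_zero z, CFC.rpow_one z] using conj_rpow 0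
  have hright : y * z ^ (1 / 2 : ℝ) * z ^ (-1 : ℝ) * star (y * z ^ (1 / 2 : ℝ)) = y * star y := by
    rw [conj_rpow, neg_add_cancel, CFC.rpow_zero z, mul_one]
  calc geo (y * z * star y) (y * star y) (1 - t)
      = y * z ^ (1 / 2 : ℝ) * (z ^ (-1 : ℝ)) ^ (1 - t) * star (y * z ^ (1 / 2 : ℝ)) := by
        rw [← geo_mul_star_self (hy.mul (hz.rpow z _).isUnit) (hz.rpow z _), hleft, hright]
    _ = y * z ^ t * star y := by
        rw [CFC.rpow_rpow z _ _ (by norm_num), conj_rpow]; ring_nf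

lemma exists_eq_mul_star_self_eq_conj {a b : A} (ha : IsStrictlyPositive a)
    (hb : IsStrictlyPositive b) :
    ∃ y z : A, IsUnit y ∧ IsStrictlyPositive z ∧ a = y * star y ∧ b = y * z * star y := by
  have hp_star := (isSelfAdjoint_rpow a (1 / 2)).star_eq
  refine ⟨a ^ (1 / 2 : ℝ), _, (ha.rpow a _).isUnit,
    isStrictlyPositive_rpow_conj ha hb (-(1 / 2)), ?_, ?_⟩
  · rw [hp_star, rpow_half_mul_rpow_half ha.nonneg]
  · calc b = (a ^ (1 / 2 : ℝ) * a ^ (-(1 / 2) : ℝ)) * b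
          * (a ^ (-(1 / 2) : ℝ) * a ^ (1 / 2 : ℝ)) := by
          rw [CFC.rpow_mul_rpow_neg _ ha, CFC.rpow_neg_mul_rpow _ ha, one_mul, mul_one]
      _ = _ := by rw [hp_star]; simp only [mul_assoc]

lemma geo_swap {a b : A} (ha : IsStrictlyPositive a) (hb : IsStrictlyPositive b) (t : ℝ) :
    geo b a (1 - t) = geo a b t := by
  obtain ⟨y, z, hy, hz, rfl, rfl⟩ := exists_eq_mul_star_self_eq_conj ha hb
  rw [geo_mul_star_self_swap hy hz, geo_mul_star_self hy hz]

lemma geo_smul_right {a b : A} (ha : IsStrictlyPositive a) (hb : IsStrictlyPositive b) {m : ℝ}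
    (hm : 0 < m) (t : ℝ) : geo a (m • b) t = m ^ t • geo a b t := by
  rw [geo_eq_rpow ha (hb.smul hm), geo_eq_rpow ha hb, mul_smul_comm, smul_mul_assoc,
    smul_rpow (isStrictlyPositive_rpow_conj ha hb _) hm, mul_smul_comm, smul_mul_assoc]

lemma geo_smul_left {a b : A} (ha : IsStrictlyPositive a) (hb : IsStrictlyPositive b) {m : ℝ}
    (hm : 0 < m) (t : ℝ) : geo (m • a) b t = m ^ (1 - t) • geo a b t := by
  rw [← geo_swap (ha.smul hm) hb, geo_smul_right hb ha hm, geo_swap ha hb]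

lemma geo_le_geo_right {a b b' : A} (ha : IsStrictlyPositive a) (hb : IsStrictlyPositive b)
    {t : ℝ} (ht : t ∈ Set.Icc (0 : ℝ) 1) (h : b ≤ b') : geo a b t ≤ geo a b' t := by
  rw [geo_eq_rpow ha hb, geo_eq_rpow ha (hb.of_le h)]
  refine (isSelfAdjoint_rpow a _).conjugate_le_conjugate (CFC.rpow_le_rpow ht ?_)
  exact (isSelfAdjoint_rpow a _).conjugate_le_conjugate h

lemma geo_le_geo {a a' b b' : A} (ha : IsStrictlyPositive a) (hb : IsStrictlyPositive b)
    {t : ℝ} (ht : t ∈ Set.Icc (0 : ℝ) 1) (haa' : a ≤ a') (hbb' : b ≤ b') :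
    geo a b t ≤ geo a' b' t := by
  have hb' := hb.of_le hbb'
  calc geo a b t ≤ geo a b' t := geo_le_geo_right ha hb ht hbb'
    _ = geo b' a (1 - t) := (geo_swap ha hb' t).symm
    _ ≤ geo b' a' (1 - t) := geo_le_geo_right hb' ha (Set.Icc.mem_iff_one_sub_mem.1 ht) haa'
    _ = geo a' b' t := geo_swap (ha.of_le haa') hb' t

lemma geo_le_exp_smul_geo {a b c e : A} (ha : IsStrictlyPositive a) (hb : IsStrictlyPositive b)
    (hc : IsStrictlyPositive c) (he : IsStrictlyPositive e) {r s t : ℝ}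
    (ht : t ∈ Set.Icc (0 : ℝ) 1) (hca : c ≤ Real.exp r • a) (heb : e ≤ Real.exp s • b) :
    geo c e t ≤ Real.exp ((1 - t) * r + t * s) • geo a b t := by
  have hb' := hb.smul (Real.exp_pos s)
  calc geo c e t ≤ geo (Real.exp r • a) (Real.exp s • b) t := geo_le_geo hc he ht hca heb
    _ = Real.exp ((1 - t) * r + t * s) • geo a b t := by
      rw [geo_smul_left ha hb' (Real.exp_pos r), geo_smul_right ha hb (Real.exp_pos s), smul_smul,
        ← Real.exp_mul, ← Real.exp_mul, ← Real.exp_add, mul_comm r, mul_comm s]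

lemma norm_clog_le_iff {a : A} (ha : IsStrictlyPositive a) {r : ℝ} (hr : 0 ≤ r) :
    ‖clog a‖ ≤ r ↔ a ≤ Real.exp r • 1 ∧ 1 ≤ Real.exp r • a := by
  have hpos : ∀ x ∈ spectrum ℝ a, 0 < x := fun _ hx =>
    (isPosInv_iff_isStrictlyPositive.2 ha).2 hx
  have hlower : 1 ≤ Real.exp r • a ↔ algebraMap ℝ A (Real.exp (-r)) ≤ a := by
    rw [Algebra.algebraMap_eq_smul_one, Real.exp_neg, inv_smul_le_iff_of_pos (Real.exp_pos r)]
  rw [hlower, ← Algebra.algebraMap_eq_smul_one, le_algebraMap_iff_spectrum_le,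
    algebraMap_le_iff_le_spectrum, ← forall₂_and, clog, norm_cfc_le_iff Real.log a hr
      (Real.continuousOn_log.mono fun x hx => (hpos x hx).ne')]
  refine forall₂_congr fun x hx => ?_
  rw [Real.norm_eq_abs, abs_le, Real.log_le_iff_le_exp (hpos x hx),
    Real.le_log_iff_exp_le (hpos x hx), and_comm]

lemma dd_le_iff {x y : A} (hx : IsStrictlyPositive x) (hy : IsStrictlyPositive y) {r : ℝ}
    (hr : 0 ≤ r) : dd x y ≤ r ↔ y ≤ Real.exp r • x ∧ x ≤ Real.exp r • y := by
  have hq := isSelfAdjoint_rpow x (-(1 / 2))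
  have hq_unit := (hx.rpow x (-(1 / 2))).isUnit
  rw [dd, cpow_eq_rpow hx.nonneg, norm_clog_le_iff (isStrictlyPositive_rpow_conj hx hy _) hr,
    ← CFC.conjugate_rpow_neg_one_half x hx]
  have hsmul : ∀ z : A, Real.exp r • (x ^ (-(1 / 2) : ℝ) * z * x ^ (-(1 / 2) : ℝ)) =
      x ^ (-(1 / 2) : ℝ) * (Real.exp r • z) * x ^ (-(1 / 2) : ℝ) := fun z => by
    rw [mul_smul_comm, smul_mul_assoc]
  rw [hsmul, hsmul, conjugate_le_conjugate_iff_of_isUnit hq hq_unit,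
    conjugate_le_conjugate_iff_of_isUnit hq hq_unit]

end StarOrderedAlgebra

section Distance

variable {A : Type*} [CStarAlgebra A]

lemma dd_nonneg (x y : A) : 0 ≤ dd x y := norm_nonneg _

lemma dd_geo_geo_le {a b c e : A} (ha : IsPosInv a) (hb : IsPosInv b) (hc : IsPosInv c)
    (he : IsPosInv e) {t : ℝ} (ht : t ∈ Set.Icc (0 : ℝ) 1) :
    dd (geo a b t) (geo c e t) ≤ (1 - t) * dd a c + t * dd b e := by
  let _ := CStarAlgebra.spectralOrder A
  have _ := CStarAlgebra.spectralOrderedRing A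
  rw [isPosInv_iff_isStrictlyPositive] at ha hb hc he
  have hr : 0 ≤ (1 - t) * dd a c + t * dd b e :=
    add_nonneg (mul_nonneg (sub_nonneg.2 ht.2) (dd_nonneg a c)) (mul_nonneg ht.1 (dd_nonneg b e))
  obtain ⟨hca, hac⟩ := (dd_le_iff ha hc (dd_nonneg a c)).1 le_rfl
  obtain ⟨heb, hbe⟩ := (dd_le_iff hb he (dd_nonneg b e)).1 le_rfl
  rw [dd_le_iff (isStrictlyPositive_geo ha hb t) (isStrictlyPositive_geo hc he t) hr]
  exact ⟨geo_le_exp_smul_geo ha hb hc he ht hca heb, geo_le_exp_smul_geo hc he ha hb ht hac hbe⟩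

lemma distSet_le_dd {C : Set A} {c : A} (hc : c ∈ C) (a : A) : distSet a C ≤ dd a c := by
  refine csInf_le ⟨0, ?_⟩ ⟨c, hc, rfl⟩
  rintro _ ⟨c, -, rfl⟩
  exact dd_nonneg a c

lemma exists_dd_lt_of_distSet_lt {C : Set A} (hne : C.Nonempty) {a : A} {r : ℝ}
    (h : distSet a C < r) : ∃ c ∈ C, dd a c < r := by
  obtain ⟨c₀, hc₀⟩ := hne
  obtain ⟨_, ⟨c, hc, rfl⟩, hlt⟩ := exists_lt_of_csInf_lt
    (s := {r : ℝ | ∃ c ∈ C, r = dd a c}) ⟨_, c₀, hc₀, rfl⟩ h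
  exact ⟨c, hc, hlt⟩

end Distance

/-- The distance to a nonempty geodesically convex subset of the positive invertible
cone is a geodesically convex function. -/
theorem stmt11 {A : Type*} [CStarAlgebra A] (C : Set A) (hne : C.Nonempty)
    (hCP : ∀ c ∈ C, IsPosInv c)
    (hconv : ∀ x ∈ C, ∀ y ∈ C, ∀ t ∈ Set.Icc (0 : ℝ) 1, geo x y t ∈ C)
    (a b : A) (ha : IsPosInv a) (hb : IsPosInv b)
    (t : ℝ) (ht : t ∈ Set.Icc (0 : ℝ) 1) :
    distSet (geo a b t) C ≤ (1 - t) * distSet a C + t * distSet b C := by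
  refine le_of_forall_pos_le_add fun ε hε => ?_
  obtain ⟨c, hc, hac⟩ := exists_dd_lt_of_distSet_lt hne (lt_add_of_pos_right (distSet a C) hε)
  obtain ⟨e, he, hbe⟩ := exists_dd_lt_of_distSet_lt hne (lt_add_of_pos_right (distSet b C) hε)
  have ht₀ : 0 ≤ t := ht.1
  have ht₁ : 0 ≤ 1 - t := sub_nonneg.2 ht.2
  calc distSet (geo a b t) C
      ≤ dd (geo a b t) (geo c e t) := distSet_le_dd (hconv c hc e he t ht) _
    _ ≤ (1 - t) * dd a c + t * dd b e := dd_geo_geo_le ha hb (hCP c hc) (hCP e he) ht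
    _ ≤ (1 - t) * (distSet a C + ε) + t * (distSet b C + ε) := by gcongr
    _ = (1 - t) * distSet a C + t * distSet b C + ε := by ring
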